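/- Let d ≥ 1, α ∈ (1,2), and let Ψ(u) = ∫_{|y|≤1} (1 − cos(⟨u,y⟩)) |y|^{−(d+α)} dy for u ∈ ℝ^d. Then Ψ is continuously differentiable on ℝ^d with ∂Ψ/∂u_j (u) = ∫_{|y|≤1} y_j sin(⟨u,y⟩) |y|^{−(d+α)} dy for each j = 1,…,d, and there exists a constant M < ∞ (depending only on d and α) such that |∂Ψ/∂u_j (u)| ≤ M |u|^{α−1} for all u ∈ ℝ^d and all j. -/

import Mathlib

open MeasureTheory Metric
open scoped RealInnerProductSpace

/-!
For a Lévy measure `ν` with `∫ min(1, |y|) |y| dν < ∞`, differentiation under the integral sign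
gives the gradient `∫ sin ⟪u, y⟫ y dν` of `∫ (1 - cos ⟪u, y⟫) dν`, since
`|sin ⟪u, y⟫ y| ≤ min(1, |u||y|) |y|`. If `ν` is a truncation of the `α`-stable measure
`|y|^{-(d+α)} dy`, integrating this majorant over the whole space and substituting `y ↦ |u|⁻¹ y`
bounds the gradient by `|u|^{α-1} ∫ min(1, |y|) |y|^{1-d-α} dy`, which is finite exactly when
`1 < α < 2`.
-/

section Bounds

lemma one_sub_cos_le_min_one_abs_mul_abs (t : ℝ) : 1 - Real.cos t ≤ min 1 |t| * |t| := by
  rcases le_total 1 |t| with ht | ht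
  · have h : |1 - Real.cos t| ≤ |t| := by simpa using Real.abs_cos_sub_cos_le 0 t
    simpa [min_eq_left ht] using (le_abs_self _).trans h
  · rw [min_eq_right ht, abs_mul_abs_self]
    nlinarith [Real.one_sub_sq_div_two_le_cos (x := t)]

lemma min_one_mul_le_mul_min_one {a R r : ℝ} (hR : 1 ≤ R) (ha : a ≤ R) (hr : 0 ≤ r) :
    min 1 (a * r) ≤ R * min 1 r := by
  rw [mul_min_of_nonneg _ _ (zero_le_one.trans hR), mul_one]
  exact min_le_min hR (mul_le_mul_of_nonneg_right ha hr)

open Set in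
lemma integrableOn_min_one_mul_rpow_neg {α : ℝ} (hα1 : 1 < α) (hα2 : α < 2) :
    IntegrableOn (fun r : ℝ => min 1 r * r ^ (-α)) (Ioi 0) := by
  rw [← Ioc_union_Ioi_eq_Ioi zero_le_one, integrableOn_union]
  constructor
  · have h : IntegrableOn (fun r : ℝ => r ^ (1 - α)) (Ioc 0 1) := by
      rw [← intervalIntegrable_iff_integrableOn_Ioc_of_le zero_le_one]
      exact intervalIntegral.intervalIntegrable_rpow' (by linarith)
    refine h.congr_fun (fun r hr => ?_) measurableSet_Ioc
    simp only [min_eq_right hr.2, sub_eq_add_neg, Real.rpow_add hr.1, Real.rpow_one]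
  · refine (integrableOn_Ioi_rpow_of_lt (neg_lt_neg hα1) zero_lt_one).congr_fun
      (fun r hr => ?_) measurableSet_Ioi
    simp only [min_eq_left (mem_Ioi.1 hr).le, one_mul]

lemma integrable_min_one_mul_norm_mul_norm {E : Type*} [NormedAddCommGroup E]
    [MeasurableSpace E] [OpensMeasurableSpace E] {ν : Measure E}
    (hν : Integrable (fun y : E => min 1 ‖y‖ * ‖y‖) ν) {a : ℝ} (ha : 0 ≤ a) :
    Integrable (fun y : E => min 1 (a * ‖y‖) * ‖y‖) ν := by
  refine (hν.const_mul (max 1 a)).mono' (by fun_prop) (.of_forall fun y => ?_)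
  rw [Real.norm_of_nonneg (by positivity), ← mul_assoc]
  exact mul_le_mul_of_nonneg_right
    (min_one_mul_le_mul_min_one (le_max_left 1 a) (le_max_right 1 a) (norm_nonneg y))
    (norm_nonneg y)

variable {E : Type*} [NormedAddCommGroup E] [InnerProductSpace ℝ E]

lemma norm_sin_inner_smul_innerSL_le (u y : E) :
    ‖Real.sin ⟪u, y⟫ • innerSL ℝ y‖ ≤ min 1 (‖u‖ * ‖y‖) * ‖y‖ := by
  rw [norm_smul, innerSL_apply_norm, Real.norm_eq_abs]
  gcongr
  exact le_min (Real.abs_sin_le_one _) (Real.abs_sin_le_abs.trans (abs_real_inner_le_norm u y))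

lemma norm_sin_inner_smul_innerSL_le_of_norm_le {R : ℝ} (hR : 1 ≤ R) {u : E} (hu : ‖u‖ ≤ R)
    (y : E) : ‖Real.sin ⟪u, y⟫ • innerSL ℝ y‖ ≤ R * (min 1 ‖y‖ * ‖y‖) := by
  rw [← mul_assoc]
  exact (norm_sin_inner_smul_innerSL_le u y).trans <| mul_le_mul_of_nonneg_right
    (min_one_mul_le_mul_min_one hR hu (norm_nonneg y)) (norm_nonneg y)

lemma one_sub_cos_inner_le (u y : E) :
    1 - Real.cos ⟪u, y⟫ ≤ ‖u‖ * (min 1 (‖u‖ * ‖y‖) * ‖y‖) := by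
  calc 1 - Real.cos ⟪u, y⟫ ≤ min 1 |⟪u, y⟫| * |⟪u, y⟫| := one_sub_cos_le_min_one_abs_mul_abs _
    _ ≤ min 1 (‖u‖ * ‖y‖) * (‖u‖ * ‖y‖) := by gcongr <;> exact abs_real_inner_le_norm u y
    _ = ‖u‖ * (min 1 (‖u‖ * ‖y‖) * ‖y‖) := by ring

lemma hasFDerivAt_one_sub_cos_inner (u y : E) :
    HasFDerivAt (fun v : E => 1 - Real.cos ⟪v, y⟫) (Real.sin ⟪u, y⟫ • innerSL ℝ y) u := by
  have h_inner : HasFDerivAt (fun v : E => ⟪v, y⟫) (innerSL ℝ y) u := by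
    simpa [real_inner_comm] using (innerSL ℝ y).hasFDerivAt (x := u)
  exact (h_inner.cos.const_sub 1).congr_fderiv (by ext; simp)

end Bounds

section LevyExponent

variable {E : Type*} [NormedAddCommGroup E] [InnerProductSpace ℝ E] [MeasurableSpace E]

/-- The characteristic exponent `u ↦ ∫ (1 - cos ⟪u, y⟫) dν(y)` of a symmetric pure-jump Lévy
process with Lévy measure `ν`. -/
noncomputable def levyExponent (ν : Measure E) (u : E) : ℝ :=
  ∫ y, (1 - Real.cos ⟪u, y⟫) ∂ν

variable [OpensMeasurableSpace E] [SecondCountableTopology E] {ν : Measure E}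

lemma integrable_one_sub_cos_inner
    (hν : Integrable (fun y : E => min 1 ‖y‖ * ‖y‖) ν) (u : E) :
    Integrable (fun y : E => 1 - Real.cos ⟪u, y⟫) ν := by
  refine ((integrable_min_one_mul_norm_mul_norm hν (norm_nonneg u)).const_mul ‖u‖).mono'
    (by fun_prop) (.of_forall fun y => ?_)
  rw [Real.norm_of_nonneg (sub_nonneg.2 (Real.cos_le_one _))]
  exact one_sub_cos_inner_le u y

lemma aestronglyMeasurable_sin_inner_smul_innerSL (u : E) :
    AEStronglyMeasurable (fun y : E => Real.sin ⟪u, y⟫ • innerSL ℝ y) ν :=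
  Continuous.aestronglyMeasurable (by fun_prop)

lemma integrable_sin_inner_smul_innerSL
    (hν : Integrable (fun y : E => min 1 ‖y‖ * ‖y‖) ν) (u : E) :
    Integrable (fun y : E => Real.sin ⟪u, y⟫ • innerSL ℝ y) ν :=
  (integrable_min_one_mul_norm_mul_norm hν (norm_nonneg u)).mono'
    (aestronglyMeasurable_sin_inner_smul_innerSL u)
    (.of_forall (norm_sin_inner_smul_innerSL_le u))

theorem hasFDerivAt_levyExponent (hν : Integrable (fun y : E => min 1 ‖y‖ * ‖y‖) ν) (u : E) :
    HasFDerivAt (levyExponent ν) (∫ y, Real.sin ⟪u, y⟫ • innerSL ℝ y ∂ν) u := by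
  refine hasFDerivAt_integral_of_dominated_of_fderiv_le
    (bound := fun y => (‖u‖ + 1) * (min 1 ‖y‖ * ‖y‖)) (s := ball 0 (‖u‖ + 1))
    (isOpen_ball.mem_nhds (by simp))
    (.of_forall fun v => (integrable_one_sub_cos_inner hν v).aestronglyMeasurable)
    (integrable_one_sub_cos_inner hν u) (aestronglyMeasurable_sin_inner_smul_innerSL u)
    (.of_forall fun y v hv => ?_) (hν.const_mul _)
    (.of_forall fun y v _ => hasFDerivAt_one_sub_cos_inner v y)
  exact norm_sin_inner_smul_innerSL_le_of_norm_le (by simp) (mem_ball_zero_iff.1 hv).le y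

lemma fderiv_levyExponent (hν : Integrable (fun y : E => min 1 ‖y‖ * ‖y‖) ν) :
    fderiv ℝ (levyExponent ν) = fun u => ∫ y, Real.sin ⟪u, y⟫ • innerSL ℝ y ∂ν :=
  funext fun u => (hasFDerivAt_levyExponent hν u).fderiv

lemma fderiv_levyExponent_apply (hν : Integrable (fun y : E => min 1 ‖y‖ * ‖y‖) ν) (u v : E) :
    fderiv ℝ (levyExponent ν) u v = ∫ y, ⟪v, y⟫ * Real.sin ⟪u, y⟫ ∂ν := by
  rw [fderiv_levyExponent hν,
    ContinuousLinearMap.integral_apply (integrable_sin_inner_smul_innerSL hν u)]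
  simp [real_inner_comm, mul_comm]

theorem contDiff_one_levyExponent (hν : Integrable (fun y : E => min 1 ‖y‖ * ‖y‖) ν) :
    ContDiff ℝ 1 (levyExponent ν) := by
  refine contDiff_one_iff_fderiv.2
    ⟨fun u => (hasFDerivAt_levyExponent hν u).differentiableAt, ?_⟩
  rw [fderiv_levyExponent hν, continuous_iff_continuousAt]
  intro u
  refine continuousAt_of_dominated (bound := fun y => (‖u‖ + 1) * (min 1 ‖y‖ * ‖y‖))
    (.of_forall aestronglyMeasurable_sin_inner_smul_innerSL) ?_ (hν.const_mul _)
    (.of_forall fun y => Continuous.continuousAt (by fun_prop))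
  filter_upwards [isOpen_ball.mem_nhds (show u ∈ ball 0 (‖u‖ + 1) by simp)] with v hv
  exact .of_forall
    (norm_sin_inner_smul_innerSL_le_of_norm_le (by simp) (mem_ball_zero_iff.1 hv).le)

theorem norm_fderiv_levyExponent_le (hν : Integrable (fun y : E => min 1 ‖y‖ * ‖y‖) ν) (u : E) :
    ‖fderiv ℝ (levyExponent ν) u‖ ≤ ∫ y, min 1 (‖u‖ * ‖y‖) * ‖y‖ ∂ν := by
  rw [fderiv_levyExponent hν]
  exact norm_integral_le_of_norm_le (integrable_min_one_mul_norm_mul_norm hν (norm_nonneg u))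
    (.of_forall (norm_sin_inner_smul_innerSL_le u))

end LevyExponent

section StableLevyMeasure

open Module Set

variable {E : Type*} [NormedAddCommGroup E] [NormedSpace ℝ E] [MeasurableSpace E]

/-- The Lévy measure `|y|^{-(d+α)} dy` of the isotropic `α`-stable process on a `d`-dimensional
space, the Lebesgue measure being replaced by an arbitrary reference measure `μ`. The density
vanishes at the origin if `d + α ≠ 0`, by the convention `0⁻¹ = 0`. -/
noncomputable def stableLevyMeasure (μ : Measure E) (α : ℝ) : Measure E :=
  μ.withDensity fun y => ((‖y‖₊ ^ ((finrank ℝ E : ℝ) + α))⁻¹ : NNReal)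

variable [BorelSpace E] {μ : Measure E} {α : ℝ}
  {F : Type*} [NormedAddCommGroup F] [NormedSpace ℝ F]

lemma setIntegral_stableLevyMeasure [SFinite μ] (f : E → F) (s : Set E) :
    ∫ y in s, f y ∂stableLevyMeasure μ α
      = ∫ y in s, (‖y‖ ^ ((finrank ℝ E : ℝ) + α))⁻¹ • f y ∂μ := by
  rw [stableLevyMeasure, setIntegral_withDensity_eq_setIntegral_smul₀' _ (by fun_prop)]
  simp only [NNReal.smul_def, NNReal.coe_inv, NNReal.coe_rpow, coe_nnnorm]

lemma integral_stableLevyMeasure [SFinite μ] (f : E → F) :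
    ∫ y, f y ∂stableLevyMeasure μ α = ∫ y, (‖y‖ ^ ((finrank ℝ E : ℝ) + α))⁻¹ • f y ∂μ := by
  simpa only [setIntegral_univ] using setIntegral_stableLevyMeasure f univ

variable [FiniteDimensional ℝ E] [μ.IsAddHaarMeasure]

lemma integrable_min_one_norm_mul_norm_stableLevyMeasure [Nontrivial E]
    (hα1 : 1 < α) (hα2 : α < 2) :
    Integrable (fun y : E => min 1 ‖y‖ * ‖y‖) (stableLevyMeasure μ α) := by
  rw [stableLevyMeasure, integrable_withDensity_iff_integrable_smul (by fun_prop)]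
  simp only [NNReal.smul_def, NNReal.coe_inv, NNReal.coe_rpow, coe_nnnorm, smul_eq_mul]
  rw [integrable_fun_norm_addHaar μ
    (f := fun r => (r ^ ((finrank ℝ E : ℝ) + α))⁻¹ * (min 1 r * r))]
  refine (integrableOn_min_one_mul_rpow_neg hα1 hα2).congr_fun (fun r (hr : 0 < r) => ?_)
    measurableSet_Ioi
  have h_pow : r ^ finrank ℝ E = r ^ (finrank ℝ E - 1) * r :=
    (pow_sub_one_mul finrank_pos.ne' r).symm
  simp only [smul_eq_mul, Real.rpow_neg hr.le, Real.rpow_add hr, Real.rpow_natCast, h_pow]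
  field_simp

lemma integral_comp_smul_stableLevyMeasure (f : E → F) {r : ℝ} (hr : 0 < r) :
    ∫ y, f (r • y) ∂stableLevyMeasure μ α = r ^ α • ∫ y, f y ∂stableLevyMeasure μ α := by
  set p : ℝ := (finrank ℝ E : ℝ) + α with hp
  have h_homog (y : E) :
      (‖y‖ ^ p)⁻¹ • f (r • y) = r ^ p • ((‖r • y‖ ^ p)⁻¹ • f (r • y)) := by
    rw [norm_smul, Real.norm_of_nonneg hr.le, Real.mul_rpow hr.le (norm_nonneg y), smul_smul,
      mul_inv, mul_inv_cancel_left₀ (Real.rpow_pos_of_pos hr p).ne']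
  simp_rw [integral_stableLevyMeasure, ← hp, h_homog]
  rw [integral_smul, Measure.integral_comp_smul_of_nonneg μ (fun y => (‖y‖ ^ p)⁻¹ • f y) r
    (hR := hr.le), smul_smul, hp, Real.rpow_add hr, Real.rpow_natCast,
    mul_right_comm, mul_inv_cancel₀ (pow_pos hr _).ne', one_mul]

lemma integral_min_one_mul_norm_stableLevyMeasure (hα : α ≠ 1) {r : ℝ} (hr : 0 ≤ r) :
    ∫ y : E, min 1 (r * ‖y‖) * ‖y‖ ∂stableLevyMeasure μ α
      = (∫ y : E, min 1 ‖y‖ * ‖y‖ ∂stableLevyMeasure μ α) * r ^ (α - 1) := by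
  rcases hr.eq_or_lt with rfl | hr
  · simp [Real.zero_rpow (sub_ne_zero.2 hα)]
  have h_comp (y : E) : min 1 (r * ‖y‖) * ‖y‖ = r⁻¹ * (min 1 ‖r • y‖ * ‖r • y‖) := by
    rw [norm_smul, Real.norm_of_nonneg hr.le]
    field_simp
  simp_rw [h_comp]
  rw [integral_const_mul, integral_comp_smul_stableLevyMeasure (fun y => min 1 ‖y‖ * ‖y‖) hr,
    Real.rpow_sub_one hr.ne', smul_eq_mul]
  ring

end StableLevyMeasure

section TruncatedStable

open Module

variable {E : Type*} [NormedAddCommGroup E] [InnerProductSpace ℝ E] [FiniteDimensional ℝ E]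
  [Nontrivial E] [MeasurableSpace E] [BorelSpace E] (μ : Measure E) [μ.IsAddHaarMeasure]

theorem norm_fderiv_levyExponent_stableLevyMeasure_restrict_le {α : ℝ} (hα1 : 1 < α)
    (hα2 : α < 2) (s : Set E) (u : E) :
    ‖fderiv ℝ (levyExponent ((stableLevyMeasure μ α).restrict s)) u‖
      ≤ (∫ y : E, min 1 ‖y‖ * ‖y‖ ∂stableLevyMeasure μ α) * ‖u‖ ^ (α - 1) := by
  have h_int := integrable_min_one_norm_mul_norm_stableLevyMeasure (μ := μ) hα1 hα2
  rw [← integral_min_one_mul_norm_stableLevyMeasure hα1.ne' (norm_nonneg u)]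
  exact (norm_fderiv_levyExponent_le h_int.restrict u).trans <|
    setIntegral_le_integral (integrable_min_one_mul_norm_mul_norm h_int (norm_nonneg u))
      (.of_forall fun y => by positivity)

theorem stmt_3_general {α : ℝ} (hα1 : 1 < α) (hα2 : α < 2) (s : Set E) (Ψ : E → ℝ)
    (hΨ : ∀ u, Ψ u = ∫ y in s, (1 - Real.cos ⟪u, y⟫) / ‖y‖ ^ ((finrank ℝ E : ℝ) + α) ∂μ) :
    ContDiff ℝ 1 Ψ ∧
    (∀ u v : E, fderiv ℝ Ψ u v =
      ∫ y in s, ⟪v, y⟫ * Real.sin ⟪u, y⟫ / ‖y‖ ^ ((finrank ℝ E : ℝ) + α) ∂μ) ∧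
    ∃ M : ℝ, ∀ u v : E, |fderiv ℝ Ψ u v| ≤ M * ‖u‖ ^ (α - 1) * ‖v‖ := by
  have h_int : Integrable (fun y : E => min 1 ‖y‖ * ‖y‖) ((stableLevyMeasure μ α).restrict s) :=
    (integrable_min_one_norm_mul_norm_stableLevyMeasure hα1 hα2).restrict
  obtain rfl : Ψ = levyExponent ((stableLevyMeasure μ α).restrict s) := by
    ext u
    simp only [hΨ, levyExponent, setIntegral_stableLevyMeasure, smul_eq_mul, inv_mul_eq_div]
  refine ⟨contDiff_one_levyExponent h_int, fun u v => ?_, _, fun u v =>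
    ContinuousLinearMap.le_of_opNorm_le _
      (norm_fderiv_levyExponent_stableLevyMeasure_restrict_le μ hα1 hα2 s u) v⟩
  simp only [fderiv_levyExponent_apply h_int, setIntegral_stableLevyMeasure, smul_eq_mul,
    inv_mul_eq_div]

end TruncatedStable

/-- `Ψ` is `C¹` with first partial derivatives given by
`∂Ψ/∂u_j(u) = ∫_{|y|≤1} y_j sin(⟨u,y⟩)|y|^{-(d+α)} dy`, and these are bounded
by `M |u|^{α-1}`. -/
theorem stmt_3 (d : ℕ) (hd : 1 ≤ d) (α : ℝ) (hα1 : 1 < α) (hα2 : α < 2)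
    (Ψ : EuclideanSpace ℝ (Fin d) → ℝ)
    (hΨ : ∀ u, Ψ u =
      ∫ y in Metric.closedBall (0 : EuclideanSpace ℝ (Fin d)) 1,
        (1 - Real.cos ⟪u, y⟫) / ‖y‖ ^ ((d : ℝ) + α)) :
    ContDiff ℝ 1 Ψ ∧
    (∀ (u : EuclideanSpace ℝ (Fin d)) (j : Fin d),
      fderiv ℝ Ψ u (EuclideanSpace.single j 1) =
        ∫ y in Metric.closedBall (0 : EuclideanSpace ℝ (Fin d)) 1,
          (y j) * Real.sin ⟪u, y⟫ / ‖y‖ ^ ((d : ℝ) + α)) ∧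
    ∃ M : ℝ, ∀ (u : EuclideanSpace ℝ (Fin d)) (j : Fin d),
      |fderiv ℝ Ψ u (EuclideanSpace.single j 1)| ≤ M * ‖u‖ ^ (α - 1) := by
  have : NeZero d := ⟨by omega⟩
  obtain ⟨h_contDiff, h_fderiv, M, hM⟩ := stmt_3_general volume hα1 hα2 _ Ψ
    (by simpa only [finrank_euclideanSpace_fin] using hΨ)
  exact ⟨h_contDiff,
    fun u j => by simpa [EuclideanSpace.inner_single_left] using h_fderiv u (.single j 1),
    M, fun u j => by simpa using hM u (.single j 1)⟩
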